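/- arXiv:2508.06446 — 2 statements merged into one kernel-verified Lean document; each statement's English description precedes it below -/
import Mathlib

section
/- Let n ≥ 1 be an integer. Every robust lattice covering (Λ, B_rⁿ) of ℝⁿ has density vol(B_rⁿ)/det(Λ) ≥ ν_n/2ⁿ. In particular, the optimal robust lattice covering density of ℝⁿ satisfies Θ̃_n ≥ ν_n/2ⁿ. -/
open MeasureTheory Pointwise

noncomputable section

/-- The lattice generated by vectors `b`. -/
def latticeSet {n : ℕ} (b : Fin n → EuclideanSpace ℝ (Fin n)) :
    Set (EuclideanSpace ℝ (Fin n)) :=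
  {x | ∃ c : Fin n → ℤ, x = ∑ i, (c i : ℝ) • b i}

/-- The determinant of the lattice generated by `b`. -/
def latticeDet {n : ℕ} (b : Fin n → EuclideanSpace ℝ (Fin n)) : ℝ :=
  |(Matrix.of fun i j => b j i).det|

/-- Vertex set of the parallelepiped starting at `x` generated by `v`. -/
def vertexSet {n : ℕ} (x : EuclideanSpace ℝ (Fin n))
    (v : Fin n → EuclideanSpace ℝ (Fin n)) : Set (EuclideanSpace ℝ (Fin n)) :=
  {y | ∃ lam : Fin n → ℝ, (∀ i, lam i = 0 ∨ lam i = 1) ∧ y = x + ∑ i, lam i • v i}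

/-- `P` is a fundamental parallelepiped of the lattice `Λ` with determinant `detΛ`. -/
def IsFundParallelepiped {n : ℕ} (Λ : Set (EuclideanSpace ℝ (Fin n))) (detΛ : ℝ)
    (P : Set (EuclideanSpace ℝ (Fin n))) : Prop :=
  ∃ x v, LinearIndependent ℝ v ∧ P = convexHull ℝ (vertexSet x v) ∧
    vertexSet x v ⊆ Λ ∧ volume P = ENNReal.ofReal detΛ

/-- `(Λ(b), B_r)` is a lattice covering of `ℝⁿ`. -/
def IsLatticeCovering {n : ℕ} (b : Fin n → EuclideanSpace ℝ (Fin n)) (r : ℝ) : Prop :=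
  LinearIndependent ℝ b ∧ latticeSet b + Metric.closedBall 0 r = Set.univ

/-- `(Λ(b), B_r)` is a robust lattice covering of `ℝⁿ`. -/
def IsRobustCovering {n : ℕ} (b : Fin n → EuclideanSpace ℝ (Fin n)) (r : ℝ) : Prop :=
  IsLatticeCovering b r ∧
  ∀ c : EuclideanSpace ℝ (Fin n),
    ∃ P, IsFundParallelepiped (latticeSet b) (latticeDet b) P ∧
      P ⊆ Metric.closedBall c r

/-- The density of the lattice covering `(Λ(b), B_r)`. -/
def coveringDensity {n : ℕ} (b : Fin n → EuclideanSpace ℝ (Fin n)) (r : ℝ) : ℝ :=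
  (volume (Metric.closedBall (0 : EuclideanSpace ℝ (Fin n)) r)).toReal / latticeDet b

/-- `ν_d`, the volume of the ball of radius `√d` in `ℝ^d`. -/
def nu (d : ℕ) : ℝ :=
  (volume (Metric.closedBall (0 : EuclideanSpace ℝ (Fin d)) (Real.sqrt d))).toReal

lemma aux_signs {n : ℕ} (v : Fin n → EuclideanSpace ℝ (Fin n)) (S : Finset (Fin n))
    (p : EuclideanSpace ℝ (Fin n)) :
    ∃ lam : Fin n → ℝ, (∀ i, lam i = 0 ∨ lam i = 1) ∧
      ‖p‖ ^ 2 + ∑ i ∈ S, ‖v i‖ ^ 2 / 4 ≤ ‖p + ∑ i ∈ S, (lam i - 1 / 2) • v i‖ ^ 2 := by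
  induction S using Finset.induction_on with
  | empty => exact ⟨fun _ => 0, fun _ => Or.inl rfl, by simp⟩
  | insert a S ha ih =>
    obtain ⟨lam, h01, hle⟩ := ih
    set q := p + ∑ i ∈ S, (lam i - 1 / 2) • v i with hq
    have key : ∃ t : ℝ, (t = 0 ∨ t = 1) ∧
        ‖q‖ ^ 2 + ‖v a‖ ^ 2 / 4 ≤ ‖q + (t - 1 / 2) • v a‖ ^ 2 := by
      have e : ∀ t : ℝ, ‖q + (t - 1 / 2) • v a‖ ^ 2
          = ‖q‖ ^ 2 + 2 * ((t - 1 / 2) * inner ℝ q (v a)) + (t - 1 / 2) ^ 2 * ‖v a‖ ^ 2 := by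
        intro t
        rw [norm_add_sq_real, inner_smul_right, norm_smul, mul_pow, Real.norm_eq_abs, sq_abs]
      rcases le_total 0 (inner ℝ q (v a)) with h | h
      · exact ⟨1, Or.inr rfl, by rw [e]; nlinarith⟩
      · exact ⟨0, Or.inl rfl, by rw [e]; nlinarith⟩
    obtain ⟨t, ht, hk⟩ := key
    refine ⟨Function.update lam a t, ?_, ?_⟩
    · intro i
      by_cases hi : i = a
      · subst hi; simpa using ht
      · simpa [hi] using h01 i
    · rw [Finset.sum_insert ha, Finset.sum_insert ha]
      have : ∑ i ∈ S, (Function.update lam a t i - 1 / 2) • v i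
          = ∑ i ∈ S, (lam i - 1 / 2) • v i := by
        refine Finset.sum_congr rfl fun i hi => ?_
        have : i ≠ a := fun h => ha (h ▸ hi)
        simp [this]
      rw [this, Function.update_self]
      have e2 : p + ((t - 1 / 2) • v a + ∑ i ∈ S, (lam i - 1 / 2) • v i)
          = q + (t - 1 / 2) • v a := by rw [hq]; abel
      rw [e2]; linarith

lemma aux_sum_sq {n : ℕ} (x c : EuclideanSpace ℝ (Fin n))
    (v : Fin n → EuclideanSpace ℝ (Fin n)) (r : ℝ)
    (h : vertexSet x v ⊆ Metric.closedBall c r) : ∑ i, ‖v i‖ ^ 2 ≤ 4 * r ^ 2 := by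
  obtain ⟨lam, h01, hle⟩ := aux_signs v Finset.univ (x - c + ∑ i, (1 / 2 : ℝ) • v i)
  have e : x - c + ∑ i, (1 / 2 : ℝ) • v i + ∑ i, (lam i - 1 / 2) • v i
      = (x + ∑ i, lam i • v i) - c := by
    rw [add_assoc, ← Finset.sum_add_distrib]
    have : ∀ i, (1 / 2 : ℝ) • v i + (lam i - 1 / 2) • v i = lam i • v i := by
      intro i; rw [← add_smul]; congr 1; ring
    simp_rw [this]; abel
  have hm : x + ∑ i, lam i • v i ∈ Metric.closedBall c r := h ⟨lam, h01, rfl⟩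
  rw [mem_closedBall_iff_norm, ← e] at hm
  have h2 := pow_le_pow_left₀ (norm_nonneg _) hm 2
  rw [← Finset.sum_div] at hle
  nlinarith [sq_nonneg ‖x - c + ∑ i, (1 / 2 : ℝ) • v i‖]

lemma aux_hull {n : ℕ} (x : EuclideanSpace ℝ (Fin n))
    (v : Fin n → EuclideanSpace ℝ (Fin n)) :
    convexHull ℝ (vertexSet x v) = x +ᵥ parallelepiped v := by
  rw [parallelepiped_eq_convexHull, ← convexHull_vadd]
  congr 1
  ext y
  simp only [vertexSet, Set.mem_setOf_eq, Set.mem_vadd_set, Set.mem_fintype_sum, vadd_eq_add]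
  constructor
  · rintro ⟨lam, h, rfl⟩
    refine ⟨_, ⟨fun i => lam i • v i, fun i => ?_, rfl⟩, rfl⟩
    rcases h i with h | h <;> simp [h]
  · rintro ⟨_, ⟨g, hg, rfl⟩, rfl⟩
    have : ∀ i, ∃ t : ℝ, (t = 0 ∨ t = 1) ∧ g i = t • v i := by
      intro i
      rcases hg i with h | h
      · exact ⟨0, Or.inl rfl, by simpa using h⟩
      · exact ⟨1, Or.inr rfl, by simpa using h⟩
    choose t h1 h2 using this
    exact ⟨t, h1, by simp_rw [h2]⟩

lemma aux_vol {n : ℕ} (x : EuclideanSpace ℝ (Fin n))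
    (v : Fin n → EuclideanSpace ℝ (Fin n)) :
    volume (convexHull ℝ (vertexSet x v)) ≤ ENNReal.ofReal (∏ i, ‖v i‖) := by
  haveI : Fact (Module.finrank ℝ (EuclideanSpace ℝ (Fin n)) = n) := ⟨by simp⟩
  let o : Orientation ℝ (EuclideanSpace ℝ (Fin n)) (Fin n) :=
    (EuclideanSpace.basisFun (Fin n) ℝ).toBasis.orientation
  rw [aux_hull, measure_vadd, ← o.measure_eq_volume, AlternatingMap.measure_parallelepiped]
  exact ENNReal.ofReal_le_ofReal (o.abs_volumeForm_apply_le v)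

lemma aux_amgm {n : ℕ} (hn : 1 ≤ n) (a : Fin n → ℝ) (ha : ∀ i, 0 ≤ a i) (r : ℝ) (hr : 0 ≤ r)
    (h : ∑ i, a i ^ 2 ≤ 4 * r ^ 2) : ∏ i, a i ≤ (2 * r / Real.sqrt n) ^ n := by
  have hn0 : (0 : ℝ) < n := by exact_mod_cast hn
  have hn1 : n ≠ 0 := by omega
  have H := Real.geom_mean_le_arith_mean_weighted (Finset.univ : Finset (Fin n))
    (fun _ => (n : ℝ)⁻¹) (fun i => a i ^ 2) (fun _ _ => by positivity)
    (by simp [hn0.ne']) (fun _ _ => by positivity)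
  rw [← Finset.mul_sum, Real.finsetProd_rpow _ _ (fun _ _ => by positivity)] at H
  have H2 : (∏ i, a i ^ 2) ≤ (4 * r ^ 2 / n) ^ n := by
    have hp : 0 ≤ ∏ i, a i ^ 2 := Finset.prod_nonneg fun _ _ => by positivity
    calc (∏ i, a i ^ 2) = ((∏ i, a i ^ 2) ^ ((n : ℝ)⁻¹)) ^ n := (Real.rpow_inv_natCast_pow hp hn1).symm
      _ ≤ _ := by
        refine pow_le_pow_left₀ (Real.rpow_nonneg hp _) (H.trans ?_) n
        rw [div_eq_inv_mul]; gcongr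
  have e : (4 * r ^ 2 / n) ^ n = ((2 * r / Real.sqrt n) ^ n) ^ 2 := by
    rw [← pow_mul, mul_comm n 2, pow_mul, div_pow (2 * r), Real.sq_sqrt hn0.le]; ring
  rw [Finset.prod_pow, e] at H2
  exact (pow_le_pow_iff_left₀ (Finset.prod_nonneg fun i _ => ha i) (by positivity) two_ne_zero).1 H2

lemma aux_det_pos {n : ℕ} (b : Fin n → EuclideanSpace ℝ (Fin n)) (hb : LinearIndependent ℝ b) :
    0 < latticeDet b := by
  unfold latticeDet
  rw [abs_pos]
  have h := hb.map' (WithLp.linearEquiv 2 ℝ (Fin n → ℝ)).toLinearMap (LinearEquiv.ker _)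
  have h2 : LinearIndependent ℝ (Matrix.of fun i j => b j i).col := h
  rw [Matrix.linearIndependent_cols_iff_isUnit, Matrix.isUnit_iff_isUnit_det] at h2
  exact h2.ne_zero

lemma aux_main {n : ℕ} (hn : 1 ≤ n) (b : Fin n → EuclideanSpace ℝ (Fin n)) (r : ℝ)
    (h : IsRobustCovering b r) : nu n / 2 ^ n ≤ coveringDensity b r := by
  obtain ⟨⟨hb, -⟩, h⟩ := h
  obtain ⟨P, ⟨x, v, -, rfl, -, hvol⟩, hsub⟩ := h 0
  have hd := aux_det_pos b hb
  have hsub' := (subset_convexHull ℝ (vertexSet x v)).trans hsub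
  have hr : 0 ≤ r := by
    have : x ∈ Metric.closedBall (0 : EuclideanSpace ℝ (Fin n)) r :=
      hsub' ⟨fun _ => 0, fun _ => Or.inl rfl, by simp⟩
    exact dist_nonneg.trans this
  have h1 := aux_sum_sq x 0 v r hsub'
  have h2 := aux_amgm hn (fun i => ‖v i‖) (fun _ => norm_nonneg _) r hr h1
  have h3 := aux_vol x v
  rw [hvol] at h3
  have h4 : latticeDet b ≤ (2 * r / Real.sqrt n) ^ n :=
    ((ENNReal.ofReal_le_ofReal_iff (Finset.prod_nonneg fun _ _ => norm_nonneg _)).1 h3).trans h2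
  have hn0 : (0 : ℝ) < Real.sqrt n := Real.sqrt_pos.2 (by exact_mod_cast hn)
  unfold nu coveringDensity
  rw [Measure.addHaar_closedBall _ _ hr, Measure.addHaar_closedBall _ _ hn0.le,
    ENNReal.toReal_mul, ENNReal.toReal_mul, ENNReal.toReal_ofReal (by positivity),
    ENNReal.toReal_ofReal (by positivity), finrank_euclideanSpace_fin, div_le_div_iff₀ (by positivity) hd]
  set V := (volume (Metric.ball (0 : EuclideanSpace ℝ (Fin n)) 1)).toReal
  have hV : 0 ≤ V := ENNReal.toReal_nonneg
  calc Real.sqrt n ^ n * V * latticeDet b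
      ≤ Real.sqrt n ^ n * V * (2 * r / Real.sqrt n) ^ n := by gcongr
    _ = r ^ n * V * 2 ^ n := by rw [div_pow, mul_pow]; field_simp

lemma aux_exists (n : ℕ) : ∃ (b : Fin n → EuclideanSpace ℝ (Fin n)) (r : ℝ),
    IsRobustCovering b r := by
  let B := EuclideanSpace.basisFun (Fin n) ℝ
  have hsum : ∀ t : Fin n → ℝ, ∀ j, (∑ i, t i • B i) j = t j := by
    intro t j
    simp [B, Pi.single_apply]
  have hdet : latticeDet (fun i => B i) = 1 := by
    unfold latticeDet
    have : (Matrix.of fun i j => B j i) = (1 : Matrix (Fin n) (Fin n) ℝ) := by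
      ext i j
      simp [B, Matrix.one_apply, PiLp.single_apply]
    rw [this]; simp
  have hball : ∀ (c : EuclideanSpace ℝ (Fin n)),
      vertexSet (∑ i, ((⌊c i⌋ : ℤ) : ℝ) • B i) (fun i => B i) ⊆ Metric.closedBall c (Real.sqrt n) := by
    rintro c _ ⟨lam, h01, rfl⟩
    rw [mem_closedBall_iff_norm, EuclideanSpace.norm_eq]
    refine Real.sqrt_le_sqrt ?_
    calc _ ≤ ∑ i : Fin n, (1 : ℝ) := by
          refine Finset.sum_le_sum fun i _ => ?_
          rw [PiLp.sub_apply, PiLp.add_apply, hsum, hsum, Real.norm_eq_abs, sq_abs, sq_le_one_iff_abs_le_one, abs_le]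
          have h1 := Int.floor_le (c i)
          have h2 := Int.lt_floor_add_one (c i)
          rcases h01 i with h | h <;> rw [h] <;> constructor <;> linarith
      _ = n := by simp
  refine ⟨fun i => B i, Real.sqrt n, ⟨B.orthonormal.linearIndependent, ?_⟩, fun c => ?_⟩
  · rw [Set.eq_univ_iff_forall]
    intro c
    refine Set.mem_add.2 ⟨∑ i, ((⌊c i⌋ : ℤ) : ℝ) • B i, ⟨_, rfl⟩,
      c - ∑ i, ((⌊c i⌋ : ℤ) : ℝ) • B i, ?_, by abel⟩
    have := hball c ⟨fun _ => 0, fun _ => Or.inl rfl, rfl⟩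
    rw [mem_closedBall_iff_norm'] at this
    simpa using this
  · refine ⟨_, ⟨_, _, B.orthonormal.linearIndependent, rfl, ?_, ?_⟩,
      convexHull_min (hball c) (convex_closedBall _ _)⟩
    · rintro _ ⟨lam, h01, rfl⟩
      have : ∀ i, ∃ k : ℤ, lam i = k := by
        intro i
        rcases h01 i with h | h
        · exact ⟨0, by simpa using h⟩
        · exact ⟨1, by simpa using h⟩
      choose k hk using this
      refine ⟨fun i => ⌊c i⌋ + k i, ?_⟩
      rw [← Finset.sum_add_distrib]
      refine Finset.sum_congr rfl fun i _ => ?_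
      rw [hk, ← add_smul]; push_cast; rfl
    · rw [aux_hull, measure_vadd, hdet, ENNReal.ofReal_one]
      exact B.volume_parallelepiped

/-- Every robust lattice covering of `ℝⁿ` has density at least `ν_n / 2ⁿ`; in
particular the optimal robust lattice covering density `Θ̃_n` is at least `ν_n / 2ⁿ`. -/
theorem robust_covering_density_lower_bound (n : ℕ) (hn : 1 ≤ n) :
    (∀ (b : Fin n → EuclideanSpace ℝ (Fin n)) (r : ℝ),
      IsRobustCovering b r → nu n / 2 ^ n ≤ coveringDensity b r) ∧
    nu n / 2 ^ n ≤
      sInf {D : ℝ | ∃ (b : Fin n → EuclideanSpace ℝ (Fin n)) (r : ℝ),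
        IsRobustCovering b r ∧ coveringDensity b r = D} := by
  refine ⟨fun b r h => aux_main hn b r h, le_csInf ?_ ?_⟩
  · obtain ⟨b, r, h⟩ := aux_exists n
    exact ⟨_, b, r, h, rfl⟩
  · rintro _ ⟨b, r, h, rfl⟩
    exact aux_main hn b r h


end
end

section
/- Let n, d ≥ 1 be integers, let K ⊆ ℝⁿ be a convex body, let δ := ρ̄(ℤⁿ + K), and set C := (4^d · d^{d/2} + 1)^{d·2^d} + 1. For y = (y₁, …, y_d) ∈ ([0,1)ⁿ)^d define K_y := ⋃_{λ ∈ {0,1}^d} (K + λ₁y₁ + ⋯ + λ_d y_d). Then the Lebesgue measure of the set of y ∈ ([0,1)ⁿ)^d such that ρ̄(ℤⁿ + K_y) ≤ (Cd)^{2^d − 1} · δ^{2^d} is at least 1 − 1/C. -/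
open MeasureTheory Pointwise

noncomputable section

/-- The integer lattice `ℤⁿ ⊆ ℝⁿ`. -/
def intLat (n : ℕ) : Set (EuclideanSpace ℝ (Fin n)) :=
  {x | ∀ i, ∃ m : ℤ, x i = (m : ℝ)}

/-- The fundamental cube `[0,1)ⁿ ⊆ ℝⁿ`. -/
def unitCube (n : ℕ) : Set (EuclideanSpace ℝ (Fin n)) :=
  {x | ∀ i, x i ∈ Set.Ico (0 : ℝ) 1}

/-- The uncovered density `ρ̄(ℤⁿ + A) = vol([0,1)ⁿ \ (ℤⁿ + A))`. -/
def rhoBar {n : ℕ} (A : Set (EuclideanSpace ℝ (Fin n))) : ℝ :=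
  (volume (unitCube n \ (intLat n + A))).toReal

abbrev stdB (n : ℕ) := (EuclideanSpace.basisFun (Fin n) ℝ).toBasis

abbrev muQ (n : ℕ) : Measure (EuclideanSpace ℝ (Fin n)) := volume.restrict (unitCube n)

lemma unitCube_eq (n : ℕ) : unitCube n = ZSpan.fundamentalDomain (stdB n) := by
  ext x
  simp [unitCube, ZSpan.mem_fundamentalDomain]

lemma mem_lat_iff (n : ℕ) (x : EuclideanSpace ℝ (Fin n)) :
    x ∈ Submodule.span ℤ (Set.range (stdB n)) ↔ x ∈ intLat n := by
  rw [Module.Basis.mem_span_iff_repr_mem]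
  simp [intLat, eq_comm]

lemma meas_unitCube (n : ℕ) : MeasurableSet (unitCube n) := by
  rw [unitCube_eq]; exact ZSpan.fundamentalDomain_measurableSet _

lemma vol_unitCube (n : ℕ) : volume (unitCube n) = 1 := by
  have h := (EuclideanSpace.volume_preserving_symm_measurableEquiv_toLp (Fin n)).measure_preimage
    (s := Set.pi Set.univ fun _ => Set.Ico (0:ℝ) 1)
    (MeasurableSet.univ_pi fun _ => measurableSet_Ico).nullMeasurableSet
  rw [Real.volume_pi_Ico] at h
  simp only [sub_zero, ENNReal.ofReal_one, Finset.prod_const_one] at h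
  rw [← h]
  congr 1
  ext x
  simp [unitCube, Set.mem_pi]

instance (n : ℕ) : IsProbabilityMeasure (muQ n) := ⟨by simp [muQ, vol_unitCube]⟩

/-- periodic sets -/
def Per {n : ℕ} (U : Set (EuclideanSpace ℝ (Fin n))) : Prop :=
  ∀ z ∈ intLat n, ∀ x, z + x ∈ U ↔ x ∈ U

lemma mu_reflect {n : ℕ} {U : Set (EuclideanSpace ℝ (Fin n))} (hU : MeasurableSet U) (hp : Per U)
    (x : EuclideanSpace ℝ (Fin n)) : muQ n ((fun y => x - y) ⁻¹' U) = muQ n U := by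
  have hf : MeasurePreserving (fun y : EuclideanSpace ℝ (Fin n) => x - y) volume volume :=
    Measure.measurePreserving_sub_left volume x
  have h1 := ZSpan.isAddFundamentalDomain (stdB n) volume
  rw [← unitCube_eq] at h1
  have h2 := h1.preimage_of_equiv (f := fun y => x - y) hf.quasiMeasurePreserving
    (e := fun g => -g) (Equiv.neg _).bijective (by
      intro g y
      change x - (-(g : EuclideanSpace ℝ (Fin n)) + y) = (g : EuclideanSpace ℝ (Fin n)) + (x - y)
      abel)
  have inst : VAddInvariantMeasure (Submodule.span ℤ (Set.range (stdB n)))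
    (EuclideanSpace ℝ (Fin n)) volume :=
      inferInstanceAs <| VAddInvariantMeasure (Submodule.span ℤ (Set.range (stdB n))).toAddSubgroup
        (EuclideanSpace ℝ (Fin n)) volume
  have h3 := h1.measure_set_eq h2 hU (by
    intro g
    ext y
    exact hp g ((mem_lat_iff n _).1 g.2) y)
  rw [muQ, Measure.restrict_apply hU, Measure.restrict_apply (hf.measurable hU), h3,
    ← hf.measure_preimage (hU.inter (hf.measurable (meas_unitCube n))).nullMeasurableSet]
  congr 1
  ext y
  simp

lemma first_moment {n : ℕ} {U : Set (EuclideanSpace ℝ (Fin n))} (hU : MeasurableSet U)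
    (hp : Per U) :
    ∫⁻ y, muQ n (U ∩ (fun x => x - y) ⁻¹' U) ∂(muQ n) = muQ n U ^ 2 := by
  have hS : MeasurableSet {p : EuclideanSpace ℝ (Fin n) × EuclideanSpace ℝ (Fin n) |
      p.2 ∈ U ∧ p.2 - p.1 ∈ U} := by
    apply MeasurableSet.inter
    · exact measurable_snd hU
    · exact (measurable_snd.sub measurable_fst) hU
  have e1 := Measure.prod_apply (μ := muQ n) (ν := muQ n) hS
  have e2 := Measure.prod_apply_symm (μ := muQ n) (ν := muQ n) hS
  have e3 : ∀ x, muQ n ((fun y => (y, x)) ⁻¹' {p : EuclideanSpace ℝ (Fin n) ×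
      EuclideanSpace ℝ (Fin n) | p.2 ∈ U ∧ p.2 - p.1 ∈ U})
        = U.indicator (fun _ => muQ n U) x := by
    intro x
    by_cases hx : x ∈ U
    · simp only [Set.indicator_of_mem hx]
      rw [← mu_reflect hU hp x]
      congr 1
      ext y; simp [hx]
    · simp [hx]
  simp_rw [e3] at e2
  rw [lintegral_indicator_const hU, ← sq] at e2
  rw [← e2, e1]
  rfl

def VV {n d : ℕ} (U : Set (EuclideanSpace ℝ (Fin n))) (y : Fin d → EuclideanSpace ℝ (Fin n)) :
    Set (EuclideanSpace ℝ (Fin n)) :=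
  {x | ∀ lam : Fin d → Bool, x - ∑ i, (if lam i then y i else 0) ∈ U}

lemma VV_cons {n d : ℕ} (U : Set (EuclideanSpace ℝ (Fin n))) (y0 : EuclideanSpace ℝ (Fin n))
    (y : Fin d → EuclideanSpace ℝ (Fin n)) :
    VV U (Fin.cons y0 y : Fin (d+1) → _) = VV (U ∩ (fun x => x - y0) ⁻¹' U) y := by
  ext x
  simp only [VV, Set.mem_ofPred_eq, Fin.forall_fin_succ_pi, Fin.sum_univ_succ, Fin.cons_zero,
    Fin.cons_succ, Bool.forall_bool, Set.mem_inter_iff, Set.mem_preimage]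
  simp only [← forall_and, Bool.false_eq_true, if_false, if_true, zero_add, sub_sub]
  simp only [add_comm y0, forall_and]

lemma meas_VV {n d : ℕ} {U : Set (EuclideanSpace ℝ (Fin n))} (hU : MeasurableSet U) :
    MeasurableSet {p : (Fin d → EuclideanSpace ℝ (Fin n)) × EuclideanSpace ℝ (Fin n) |
      p.2 ∈ VV U p.1} := by
  have e : {p : (Fin d → EuclideanSpace ℝ (Fin n)) × EuclideanSpace ℝ (Fin n) |
      p.2 ∈ VV U p.1} = ⋂ lam : Fin d → Bool,
      (fun p : (Fin d → EuclideanSpace ℝ (Fin n)) × EuclideanSpace ℝ (Fin n) =>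
      p.2 - ∑ i, (if lam i then p.1 i else 0)) ⁻¹' U := by
    ext p; simp [VV]
  rw [e]
  refine MeasurableSet.iInter fun lam => ?_
  have : Measurable (fun p : (Fin d → EuclideanSpace ℝ (Fin n)) × EuclideanSpace ℝ (Fin n) =>
      p.2 - ∑ i, (if lam i then p.1 i else 0)) := by
    refine measurable_snd.sub (Finset.measurable_sum _ fun i _ => ?_)
    by_cases h : lam i
    · simp only [h, if_true]; fun_prop
    · simp only [h]; exact measurable_const
  exact this hU

lemma meas_muVV {n d : ℕ} {U : Set (EuclideanSpace ℝ (Fin n))} (hU : MeasurableSet U) :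
    Measurable fun y : Fin d → EuclideanSpace ℝ (Fin n) => muQ n (VV U y) :=
  measurable_measure_prodMk_left (ν := muQ n) (meas_VV hU)

lemma meas_step {n : ℕ} {U : Set (EuclideanSpace ℝ (Fin n))} (hU : MeasurableSet U) :
    Measurable fun y : EuclideanSpace ℝ (Fin n) => muQ n (U ∩ (fun x => x - y) ⁻¹' U) := by
  have hS : MeasurableSet {p : EuclideanSpace ℝ (Fin n) × EuclideanSpace ℝ (Fin n) |
      p.2 ∈ U ∧ p.2 - p.1 ∈ U} := by
    apply MeasurableSet.inter
    · exact measurable_snd hU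
    · exact (measurable_snd.sub measurable_fst) hU
  exact measurable_measure_prodMk_left (ν := muQ n) hS

lemma markov_step {n : ℕ} {U : Set (EuclideanSpace ℝ (Fin n))} (hU : MeasurableSet U)
    (hp : Per U) (a : ENNReal) (ha0 : a ≠ 0) (ha : a ≠ ⊤) :
    muQ n {y | a * muQ n U ^ 2 < muQ n (U ∩ (fun x => x - y) ⁻¹' U)} ≤ a⁻¹ := by
  by_cases h0 : muQ n U = 0
  · have : {y | a * muQ n U ^ 2 < muQ n (U ∩ (fun x => x - y) ⁻¹' U)} = ∅ := by
      ext y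
      have := measure_mono_null (Set.inter_subset_left (t := (fun x => x - y) ⁻¹' U)) h0
      simp [this]
    rw [this]; simp
  · have hm : muQ n U ^ 2 ≠ 0 := pow_ne_zero _ h0
    have hm' : muQ n U ^ 2 ≠ ⊤ := ENNReal.pow_ne_top (measure_ne_top _ _)
    have := meas_ge_le_lintegral_div (μ := muQ n) (meas_step hU).aemeasurable
      (mul_ne_zero ha0 hm) (ENNReal.mul_ne_top ha hm')
    rw [first_moment hU hp] at this
    refine (measure_mono fun y hy => ?_).trans (this.trans ?_)
    · have hy' : a * muQ n U ^ 2 < muQ n (U ∩ (fun x => x - y) ⁻¹' U) := hy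
      exact hy'.le
    · rw [ENNReal.div_eq_inv_mul, ENNReal.mul_inv (Or.inl ha0) (Or.inl ha), mul_assoc,
        ENNReal.inv_mul_cancel hm hm', mul_one]

lemma Per.step {n : ℕ} {U : Set (EuclideanSpace ℝ (Fin n))} (hp : Per U)
    (y : EuclideanSpace ℝ (Fin n)) : Per (U ∩ (fun x => x - y) ⁻¹' U) := by
  intro z hz x
  simp only [Set.mem_inter_iff, Set.mem_preimage, hp z hz x, add_sub_assoc, hp z hz (x - y)]

lemma bad_bound {n : ℕ} (a : ENNReal) (ha0 : a ≠ 0) (ha : a ≠ ⊤) (d : ℕ) :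
    ∀ U : Set (EuclideanSpace ℝ (Fin n)), MeasurableSet U → Per U →
    (Measure.pi fun _ : Fin d => muQ n)
      {y | a ^ (2 ^ d - 1) * muQ n U ^ 2 ^ d < muQ n (VV U y)} ≤ d * a⁻¹ := by
  induction d with
  | zero =>
    intro U hU hp
    simp [VV]
  | succ d ih =>
    intro U hU hp
    set S : Set (Fin (d+1) → EuclideanSpace ℝ (Fin n)) :=
      {y | a ^ (2 ^ (d+1) - 1) * muQ n U ^ 2 ^ (d+1) < muQ n (VV U y)} with hSdef
    have hS : MeasurableSet S := measurableSet_lt measurable_const (meas_muVV hU)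
    have mp := (measurePreserving_piFinSuccAbove (fun _ : Fin (d+1) => muQ n) 0).symm
    rw [← mp.measure_preimage hS.nullMeasurableSet, Measure.prod_apply (mp.measurable hS)]
    set B : Set (EuclideanSpace ℝ (Fin n)) :=
      {y | a * muQ n U ^ 2 < muQ n (U ∩ (fun x => x - y) ⁻¹' U)} with hB
    have hBm : MeasurableSet B := measurableSet_lt measurable_const (meas_step hU)
    calc _ ≤ ∫⁻ y0, (B.indicator (fun _ => (1:ENNReal)) y0 + d * a⁻¹) ∂(muQ n) := by
          apply lintegral_mono
          intro y0
          by_cases hy : y0 ∈ B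
          · simp only [Set.indicator_of_mem hy]
            exact prob_le_one.trans le_self_add
          · simp only [Set.indicator_of_notMem hy, zero_add]
            refine (measure_mono fun y hyS => ?_).trans (ih _ (hU.inter
              ((measurable_id.sub_const y0) hU)) (hp.step y0))
            have h1 : a ^ (2 ^ (d+1) - 1) * muQ n U ^ 2 ^ (d+1)
                < muQ n (VV U (Fin.cons y0 y : Fin (d+1) → _)) := by
              simpa [hSdef, Fin.insertNthEquiv] using hyS
            rw [VV_cons] at h1
            refine lt_of_le_of_lt ?_ h1
            have hy' : muQ n (U ∩ (fun x => x - y0) ⁻¹' U) ≤ a * muQ n U ^ 2 := not_lt.1 hy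
            calc _ ≤ a ^ (2 ^ d - 1) * (a * muQ n U ^ 2) ^ 2 ^ d := by gcongr; exact hy'
              _ = _ := by
                rw [mul_pow, ← mul_assoc, ← pow_add, ← pow_mul, pow_succ' 2 d]
                congr 2
                have := Nat.one_le_two_pow (n := d)
                omega
      _ = muQ n B + d * a⁻¹ := by
          rw [lintegral_add_right _ measurable_const, lintegral_indicator_const hBm]
          simp
      _ ≤ _ := by
          push_cast
          rw [add_mul, one_mul, add_comm]
          gcongr
          exact markov_step hU hp a ha0 ha

lemma intLat_isClosed (n : ℕ) : IsClosed (intLat n) := by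
  have : intLat n = ⋂ i, (fun x : EuclideanSpace ℝ (Fin n) => x i) ⁻¹'
      (Set.range ((↑) : ℤ → ℝ)) := by
    ext x; simp [intLat, eq_comm]
  rw [this]
  exact isClosed_iInter fun i =>
    Int.isClosedEmbedding_coe_real.isClosed_range.preimage (by fun_prop)

lemma diff_eq {n d : ℕ} (K : Set (EuclideanSpace ℝ (Fin n)))
    (y : Fin d → EuclideanSpace ℝ (Fin n)) :
    (intLat n + ⋃ lam ∈ {lam : Fin d → ℝ | ∀ i, lam i = 0 ∨ lam i = 1},
            (K + {∑ i, lam i • y i}))ᶜ = VV (intLat n + K)ᶜ y := by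
  ext x
  simp only [VV, Set.mem_compl_iff, Set.mem_ofPred_eq, ← not_exists, not_iff_not]
  constructor
  · rintro ⟨z, hz, w, hw, rfl⟩
    simp only [Set.mem_iUnion] at hw
    obtain ⟨lam, hl, k, hk, s, hs, rfl⟩ := hw
    rw [Set.mem_singleton_iff] at hs
    classical
    refine ⟨fun i => decide (lam i = 1), z, hz, k, hk, ?_⟩
    have : s = ∑ i, (if decide (lam i = 1) = true then y i else 0) := by
      rw [hs]
      refine Finset.sum_congr rfl fun i _ => ?_
      rcases hl i with h | h <;> simp [h]
    rw [← this]
    simp only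
    abel
  · rintro ⟨lam, z, hz, k, hk, h⟩
    refine ⟨z, hz, k + ∑ i, (if lam i then y i else 0), ?_, ?_⟩
    · simp only [Set.mem_iUnion]
      refine ⟨fun i => if lam i then 1 else 0, ?_, k, hk, _, rfl, ?_⟩
      · intro i; by_cases h : lam i <;> simp [h]
      · simp
    · simp only at h ⊢
      rw [← add_assoc, h]; abel

/-- **Claim 3.5.** Let `K ⊆ ℝⁿ` be a convex body with `δ = ρ̄(ℤⁿ + K)`, and let
`C = (4^d d^{d/2} + 1)^{d·2^d} + 1`. For random translates `y₁, …, y_d ∈ [0,1)ⁿ`, with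
probability at least `1 − 1/C` the union `K_y = ⋃_{λ ∈ {0,1}^d} (K + λ₁y₁ + ⋯ + λ_d y_d)`
satisfies `ρ̄(ℤⁿ + K_y) ≤ (Cd)^{2^d − 1} δ^{2^d}`. -/
theorem random_translates_good_probability (n d : ℕ) (hn : 1 ≤ n) (hd : 1 ≤ d)
    (K : Set (EuclideanSpace ℝ (Fin n)))
    (hKcpt : IsCompact K) (hKconv : Convex ℝ K) (hKint : (interior K).Nonempty)
    (δ C : ℝ) (hδ : δ = rhoBar K)
    (hC : C = (4 ^ d * (d : ℝ) ^ ((d : ℝ) / 2) + 1) ^ (d * 2 ^ d) + 1) :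
    ENNReal.ofReal (1 - 1 / C) ≤
      volume {y : Fin d → EuclideanSpace ℝ (Fin n) |
        (∀ i, y i ∈ unitCube n) ∧
        rhoBar (⋃ lam ∈ {lam : Fin d → ℝ | ∀ i, lam i = 0 ∨ lam i = 1},
            (K + {∑ i, lam i • y i})) ≤
          (C * d) ^ (2 ^ d - 1) * δ ^ 2 ^ d} := by
  have hCpos : 0 < C := by rw [hC]; positivity
  have hd' : (0:ℝ) < d := by exact_mod_cast hd
  set U : Set (EuclideanSpace ℝ (Fin n)) := (intLat n + K)ᶜ with hUdef
  have hU : MeasurableSet U :=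
    ((intLat_isClosed n).add_right_of_isCompact hKcpt).measurableSet.compl
  have hp : Per U := by
    intro z hz x
    rw [hUdef, Set.mem_compl_iff, Set.mem_compl_iff, not_iff_not]
    constructor
    · rintro ⟨w, hw, k, hk, h⟩
      refine ⟨w - z, ?_, k, hk, ?_⟩
      · intro i
        obtain ⟨p, hp⟩ := hw i
        obtain ⟨q, hq⟩ := hz i
        exact ⟨p - q, by simp [hp, hq]⟩
      · simp only at h ⊢
        rw [sub_add_eq_add_sub, h]; abel
    · rintro ⟨w, hw, k, hk, rfl⟩
      refine ⟨z + w, ?_, k, hk, add_assoc _ _ _⟩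
      intro i
      obtain ⟨p, hp⟩ := hw i
      obtain ⟨q, hq⟩ := hz i
      exact ⟨q + p, by simp [hp, hq]⟩
  have hrho : ∀ A : Set (EuclideanSpace ℝ (Fin n)), rhoBar A = (muQ n (intLat n + A)ᶜ).toReal := by
    intro A
    rw [rhoBar, muQ, Measure.restrict_apply' (meas_unitCube n), Set.sdiff_eq, Set.inter_comm]
  set a : ENNReal := ENNReal.ofReal (C * d) with ha
  have ha0 : a ≠ 0 := by rw [ha]; simp; positivity
  have haT : a ≠ ⊤ := ENNReal.ofReal_ne_top
  have hbad := bad_bound a ha0 haT d U hU hp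
  have hda : (d : ENNReal) * a⁻¹ = ENNReal.ofReal (1 / C) := by
    rw [ha, ← ENNReal.ofReal_inv_of_pos (by positivity), ← ENNReal.ofReal_natCast,
      ← ENNReal.ofReal_mul (by positivity)]
    congr 1
    field_simp
  rw [hda] at hbad
  set S : Set (Fin d → EuclideanSpace ℝ (Fin n)) :=
    {y | a ^ (2 ^ d - 1) * muQ n U ^ 2 ^ d < muQ n (VV U y)} with hSdef
  have hS : MeasurableSet S := measurableSet_lt measurable_const (meas_muVV hU)
  have hcompl : ENNReal.ofReal (1 - 1 / C) ≤ (Measure.pi fun _ : Fin d => muQ n) Sᶜ := by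
    rw [prob_compl_eq_one_sub hS, ENNReal.ofReal_sub _ (by positivity), ENNReal.ofReal_one]
    gcongr
  refine hcompl.trans ?_
  have hres : (Measure.pi fun _ : Fin d => muQ n)
      = (volume : Measure (Fin d → EuclideanSpace ℝ (Fin n))).restrict
        (Set.pi Set.univ fun _ => unitCube n) := by
    rw [volume_pi, Measure.restrict_pi_pi]
  rw [hres, Measure.restrict_apply hS.compl]
  refine measure_mono ?_
  rintro y ⟨hyS, hyQ⟩
  refine ⟨fun i => hyQ i trivial, ?_⟩
  rw [hrho, diff_eq, hδ, hrho]
  have hle : muQ n (VV U y) ≤ a ^ (2 ^ d - 1) * muQ n U ^ 2 ^ d := not_lt.1 hyS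
  have := ENNReal.toReal_mono (ENNReal.mul_ne_top (ENNReal.pow_ne_top haT)
    (ENNReal.pow_ne_top (measure_ne_top _ _))) hle
  rw [ENNReal.toReal_mul, ENNReal.toReal_pow, ENNReal.toReal_pow, ha,
    ENNReal.toReal_ofReal (by positivity)] at this
  exact this

end
end
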